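/- Let M = 2m-1 with m a positive integer, and let q ≥ (m + √(m²+4m))/2. Then for all j with 1 ≤ j ≤ M-1, the right endpoint (j-1)/q + M/(q²-q) of the j-th switch interval is strictly less than the left endpoint (j+1)/q of the (j+1)-st switch interval; that is, the switch intervals [j/q, (j-1)/q + M/(q²-q)] for j = 1,...,M are pairwise disjoint. -/

import Mathlib

theorem stmt5 (m : ℕ) (hm : 0 < m) (M : ℕ) (hM : M = 2 * m - 1)
    (q : ℝ) (hq : ((m : ℝ) + Real.sqrt (m ^ 2 + 4 * m)) / 2 ≤ q)
    (j : ℕ) (hj1 : 1 ≤ j) (hj2 : j ≤ M - 1) :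
    ((j : ℝ) - 1) / q + M / (q ^ 2 - q) < ((j : ℝ) + 1) / q := by
  have hm1 : (1 : ℝ) ≤ m := by exact_mod_cast hm
  have hMr : (M : ℝ) = 2 * m - 1 := by
    have h : M + 1 = 2 * m := by omega
    have h' : (M : ℝ) + 1 = 2 * m := by exact_mod_cast h
    linarith
  have hs : (m : ℝ) + 1 < Real.sqrt (m ^ 2 + 4 * m) := by
    apply Real.lt_sqrt_of_sq_lt
    nlinarith
  have hq1 : (m : ℝ) + 1 / 2 < q := by linarith
  have hq0 : 0 < q := by linarith
  have hq2 : 0 < q - 1 := by linarith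
  have key : (M : ℝ) / (q ^ 2 - q) < 2 / q := by
    rw [show q ^ 2 - q = q * (q - 1) by ring, div_lt_div_iff₀ (mul_pos hq0 hq2) hq0]
    have : (M : ℝ) < 2 * (q - 1) := by linarith
    nlinarith
  have e : ((j : ℝ) + 1) / q = ((j : ℝ) - 1) / q + 2 / q := by ring
  linarith
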